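/- Every Lengyel transfer game L(b;x₁,y₁;x₂,y₂) is eventually horizontally periodic: there exist a positive integer p and a natural number x₀ such that SG(x+p, y) = SG(x,y) for all x ≥ x₀ and all y ∈ ℕ. -/

import Mathlib

/-- The minimum excludant of a set of naturals: the least natural number not in the set. -/
noncomputable def mex (S : Set ℕ) : ℕ := sInf {n : ℕ | n ∉ S}

/-- `SG` is the Sprague–Grundy function of the Lengyel transfer game `L(b; x₁,y₁; x₂,y₂)`:
from `(x,y)` one may move to `(x, y−b)` (when `y ≥ b`), to `(x−x₁, y+y₁)` (when `x ≥ x₁`),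
or to `(x−x₂, y+y₂)` (when `x ≥ x₂`), and `SG` satisfies the mex recurrence. -/
def IsLengyelSG (b x1 y1 x2 y2 : ℕ) (SG : ℕ → ℕ → ℕ) : Prop :=
  ∀ x y : ℕ, SG x y = mex
    ((if b ≤ y then ({SG x (y - b)} : Set ℕ) else ∅) ∪
     (if x1 ≤ x then ({SG (x - x1) (y + y1)} : Set ℕ) else ∅) ∪
     (if x2 ≤ x then ({SG (x - x2) (y + y2)} : Set ℕ) else ∅))

/-!
A column of the game is determined by its horizontal option values `T`, because the vertical move
goes down by `b`. If `T` has period `2b`, then so does the column `c`: moving `c` up by `2b` gives a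
solution of the same recurrence, since for `y < b` the extra option value `c (y + b)` of
`(x, y + 2b)` differs from `c y = mex (T y)` and so does not affect the mex. By induction on `x`,
every column has period `2b`; as its values are bounded, there are only finitely many columns. Each
column far enough to the right is determined by a fixed number of its predecessors, so the sequence
of columns is eventually periodic by the pigeonhole principle. The argument allows any finite
set of horizontal moves.
-/

section EventuallyPeriodic

variable {α : Type*}

theorem exists_eventually_periodic_of_finite_range {f : ℕ → α} (hf : (Set.range f).Finite) {L : ℕ}
    (hrec : ∀ i j, (∀ k < L, f (i + k) = f (j + k)) → f (i + L) = f (j + L)) :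
    ∃ p, 0 < p ∧ ∃ n₀, ∀ n, n₀ ≤ n → f (n + p) = f n := by
  let window (i : ℕ) (k : Fin L) : α := f (i + k)
  have hwindow_mem (i : ℕ) : window i ∈ {w | ∀ k, w k ∈ Set.range f} := fun k =>
    Set.mem_range_self (i + k)
  obtain ⟨i, j, hij, hwindow⟩ :=
    Set.Finite.exists_lt_map_eq_of_forall_mem hwindow_mem (Set.Finite.pi' fun _ => hf)
  have hagree : ∀ n, f (i + n) = f (j + n) := by
    intro n
    induction n using Nat.strong_induction_on with
    | _ n ih =>
      rcases lt_or_ge n L with hn | hn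
      · exact congrFun hwindow ⟨n, hn⟩
      · obtain ⟨m, rfl⟩ := Nat.exists_eq_add_of_le' hn
        simp only [← add_assoc]
        refine hrec (i + m) (j + m) fun k hk => ?_
        simpa only [add_assoc] using ih (m + k) (by omega)
  refine ⟨j - i, by omega, i, fun n hn => ?_⟩
  obtain ⟨m, rfl⟩ := Nat.exists_eq_add_of_le hn
  rw [hagree m]
  congr 1
  omega

theorem finite_setOf_periodic {P : ℕ} (hP : 0 < P) {s : Set α} (hs : s.Finite) :
    {c : ℕ → α | Function.Periodic c P ∧ ∀ y, c y ∈ s}.Finite := by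
  refine Set.Finite.of_injOn (f := fun c (r : Fin P) => c r)
    (t := {w : Fin P → α | ∀ r, w r ∈ s}) (fun c hc r => hc.2 r) ?_ (Set.Finite.pi' fun _ => hs)
  intro c hc c' hc' hcc'
  funext y
  rw [← hc.1.map_mod_nat y, ← hc'.1.map_mod_nat y]
  exact congrFun hcc' ⟨y % P, Nat.mod_lt y hP⟩

end EventuallyPeriodic

section Mex

variable {S : Set ℕ}

theorem mex_notMem (hS : S.Finite) : mex S ∉ S :=
  Nat.sInf_mem hS.exists_notMem

theorem mex_le_of_notMem {n : ℕ} (hn : n ∉ S) : mex S ≤ n :=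
  Nat.sInf_le hn

theorem mem_of_lt_mex {n : ℕ} (hn : n < mex S) : n ∈ S :=
  not_not.mp (Nat.notMem_of_lt_sInf hn)

theorem mex_le_ncard (hS : S.Finite) : mex S ≤ S.ncard := by
  have hsub : (Finset.range (mex S) : Set ℕ) ⊆ S := fun _ hn =>
    mem_of_lt_mex (by simpa using hn)
  simpa using Set.ncard_le_ncard hsub hS

theorem mex_insert_of_ne (hS : S.Finite) {v : ℕ} (hv : v ≠ mex S) :
    mex (insert v S) = mex S := by
  apply le_antisymm
  · exact mex_le_of_notMem (by simp [hv.symm, mex_notMem hS])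
  · exact mex_le_of_notMem fun h => mex_notMem (hS.insert v) (Set.mem_insert_of_mem v h)

end Mex

/-- The recurrence satisfied by the Sprague–Grundy values `c` of a single column: the position at
height `y` has the option at height `y - b` (when `b ≤ y`), and options outside the column whose
values form the finite set `T y`. -/
def IsMexColumn (b : ℕ) (T : ℕ → Finset ℕ) (c : ℕ → ℕ) : Prop :=
  ∀ y, c y = mex ((if b ≤ y then insert (c (y - b)) (T y) else T y : Finset ℕ) : Set ℕ)

namespace IsMexColumn

variable {b : ℕ} {T : ℕ → Finset ℕ} {c c' : ℕ → ℕ}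

theorem eq_mex_of_lt (hc : IsMexColumn b T c) {y : ℕ} (hy : y < b) : c y = mex (T y) := by
  rw [hc y, if_neg hy.not_ge]

theorem apply_add (hc : IsMexColumn b T c) (y : ℕ) :
    c (y + b) = mex (insert (c y) (T (y + b) : Set ℕ)) := by
  rw [hc (y + b), if_pos (Nat.le_add_left b y), Nat.add_sub_cancel, Finset.coe_insert]

theorem apply_ne_apply_add (hc : IsMexColumn b T c) (y : ℕ) : c y ≠ c (y + b) := by
  intro h
  refine mex_notMem ((T (y + b)).finite_toSet.insert (c y)) ?_
  rw [← hc.apply_add y, ← h]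
  exact Set.mem_insert _ _

theorem apply_le (hc : IsMexColumn b T c) (y : ℕ) : c y ≤ (T y).card + 1 := by
  rw [hc y]
  refine (mex_le_ncard (Finset.finite_toSet _)).trans ?_
  rw [Set.ncard_coe_finset]
  split_ifs
  · exact Finset.card_insert_le _ _
  · exact Nat.le_succ _

theorem unique (hb : 0 < b) (hc : IsMexColumn b T c) (hc' : IsMexColumn b T c') : c = c' := by
  funext y
  induction y using Nat.strong_induction_on with
  | _ y ih =>
    rw [hc y, hc' y]
    split_ifs with hy
    · rw [ih (y - b) (by omega)]
    · rfl

theorem shift (hc : IsMexColumn b T c) (hT : Function.Periodic T (2 * b)) :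
    IsMexColumn b T fun y => c (y + 2 * b) := by
  intro y
  have hstep : c (y + 2 * b) = mex (insert (c (y + b)) (T y : Set ℕ)) := by
    rw [← hT y, two_mul, ← add_assoc, hc.apply_add (y + b)]
  rcases lt_or_ge y b with hy | hy
  · have hne : c (y + b) ≠ mex (T y) := by
      rw [← hc.eq_mex_of_lt hy]
      exact (hc.apply_ne_apply_add y).symm
    rw [if_neg hy.not_ge]
    exact hstep.trans (mex_insert_of_ne (T y).finite_toSet hne)
  · dsimp only
    rw [if_pos hy, Finset.coe_insert, show y - b + 2 * b = y + b by omega]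
    exact hstep

theorem periodic (hb : 0 < b) (hc : IsMexColumn b T c) (hT : Function.Periodic T (2 * b)) :
    Function.Periodic c (2 * b) :=
  congrFun ((hc.shift hT).unique hb hc)

end IsMexColumn

/-- The values at the options of `(x, y)` reached by horizontal moves, where `(u, v) ∈ H` stands for
the move to `(x - u, y + v)`, legal when `u ≤ x`. -/
def horizontalValues (H : Finset (ℕ × ℕ)) (SG : ℕ → ℕ → ℕ) (x y : ℕ) : Finset ℕ :=
  {m ∈ H | m.1 ≤ x}.image fun m => SG (x - m.1) (y + m.2)

/-- `SG` satisfies the Sprague–Grundy recurrence of the transfer game with the vertical move to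
`(x, y - b)` and an arbitrary finite set `H` of horizontal moves, encoded as in
`horizontalValues`. -/
def IsTransferSG (b : ℕ) (H : Finset (ℕ × ℕ)) (SG : ℕ → ℕ → ℕ) : Prop :=
  ∀ x, IsMexColumn b (horizontalValues H SG x) (SG x)

section HorizontalValues

variable {H : Finset (ℕ × ℕ)} {SG : ℕ → ℕ → ℕ}

theorem mem_horizontalValues {x y v : ℕ} :
    v ∈ horizontalValues H SG x y ↔ ∃ m ∈ H, m.1 ≤ x ∧ SG (x - m.1) (y + m.2) = v := by
  simp only [horizontalValues, Finset.mem_image, Finset.mem_filter, and_assoc]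

theorem card_horizontalValues_le (x y : ℕ) : (horizontalValues H SG x y).card ≤ H.card :=
  Finset.card_image_le.trans (Finset.card_filter_le _ _)

theorem periodic_horizontalValues (hH : ∀ m ∈ H, 0 < m.1) {x P : ℕ}
    (hSG : ∀ x' < x, Function.Periodic (SG x') P) :
    Function.Periodic (horizontalValues H SG x) P := by
  intro y
  refine Finset.image_congr fun m hm => ?_
  obtain ⟨hmH, hmx⟩ := Finset.mem_filter.mp hm
  have hpos := hH m hmH
  simp only [add_right_comm y P]
  exact hSG (x - m.1) (by omega) (y + m.2)

theorem horizontalValues_congr (hH : ∀ m ∈ H, 0 < m.1) {L : ℕ} (hL : ∀ m ∈ H, m.1 ≤ L) {i j : ℕ}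
    (hij : ∀ k < L, SG (i + k) = SG (j + k)) :
    horizontalValues H SG (i + L) = horizontalValues H SG (j + L) := by
  have hlegal (i : ℕ) : {m ∈ H | m.1 ≤ i + L} = H :=
    Finset.filter_true_of_mem fun m hm => (hL m hm).trans (Nat.le_add_left L i)
  funext y
  unfold horizontalValues
  rw [hlegal i, hlegal j]
  refine Finset.image_congr fun m hm => ?_
  have hpos := hH m hm
  have hle := hL m hm
  simp only [Nat.add_sub_assoc hle]
  rw [hij (L - m.1) (by omega)]

end HorizontalValues

namespace IsTransferSG

variable {b : ℕ} {H : Finset (ℕ × ℕ)} {SG : ℕ → ℕ → ℕ}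

theorem apply_le (hSG : IsTransferSG b H SG) (x y : ℕ) : SG x y ≤ H.card + 1 :=
  ((hSG x).apply_le y).trans (Nat.succ_le_succ (card_horizontalValues_le x y))

theorem periodic_column (hb : 0 < b) (hH : ∀ m ∈ H, 0 < m.1) (hSG : IsTransferSG b H SG) (x : ℕ) :
    Function.Periodic (SG x) (2 * b) := by
  induction x using Nat.strong_induction_on with
  | _ x ih => exact (hSG x).periodic hb (periodic_horizontalValues hH ih)

theorem finite_range (hb : 0 < b) (hH : ∀ m ∈ H, 0 < m.1) (hSG : IsTransferSG b H SG) :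
    (Set.range SG).Finite := by
  refine (finite_setOf_periodic (P := 2 * b) (by omega) (Set.finite_Iic (H.card + 1))).subset ?_
  rintro _ ⟨x, rfl⟩
  exact ⟨hSG.periodic_column hb hH x, hSG.apply_le x⟩

theorem column_congr (hb : 0 < b) (hH : ∀ m ∈ H, 0 < m.1) (hSG : IsTransferSG b H SG) {L : ℕ}
    (hL : ∀ m ∈ H, m.1 ≤ L) {i j : ℕ} (hij : ∀ k < L, SG (i + k) = SG (j + k)) :
    SG (i + L) = SG (j + L) := by
  refine (hSG (i + L)).unique hb ?_
  rw [horizontalValues_congr hH hL hij]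
  exact hSG (j + L)

end IsTransferSG

theorem IsLengyelSG.isTransferSG {b x1 y1 x2 y2 : ℕ} {SG : ℕ → ℕ → ℕ}
    (hSG : IsLengyelSG b x1 y1 x2 y2 SG) : IsTransferSG b {(x1, y1), (x2, y2)} SG := by
  intro x y
  rw [hSG x y]
  congr 1
  ext v
  by_cases hy : b ≤ y <;>
    simp [hy, Set.mem_ite_empty_right, mem_horizontalValues, or_assoc, @eq_comm _ v]

theorem eventually_horizontally_periodic_general {b : ℕ} (hb : 0 < b) {H : Finset (ℕ × ℕ)}
    (hH : ∀ m ∈ H, 0 < m.1) {SG : ℕ → ℕ → ℕ} (hSG : IsTransferSG b H SG) :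
    ∃ p : ℕ, 0 < p ∧ ∃ x0 : ℕ, ∀ x : ℕ, x0 ≤ x → ∀ y : ℕ, SG (x + p) y = SG x y := by
  obtain ⟨p, hp, x0, hperiodic⟩ :=
    exists_eventually_periodic_of_finite_range (hSG.finite_range hb hH) (L := H.sup Prod.fst)
      fun _ _ => hSG.column_congr hb hH fun _ => Finset.le_sup (f := Prod.fst)
  exact ⟨p, hp, x0, fun x hx => congrFun (hperiodic x hx)⟩

/-- Every Lengyel transfer game is eventually horizontally periodic. -/
theorem eventually_horizontally_periodic (b x1 x2 y1 y2 : ℕ)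
    (hb : 0 < b) (hx1 : 0 < x1) (hx2 : 0 < x2)
    (SG : ℕ → ℕ → ℕ) (hSG : IsLengyelSG b x1 y1 x2 y2 SG) :
    ∃ p : ℕ, 0 < p ∧ ∃ x0 : ℕ, ∀ x : ℕ, x0 ≤ x → ∀ y : ℕ, SG (x + p) y = SG x y :=
  eventually_horizontally_periodic_general hb (by simp [hx1, hx2]) hSG.isTransferSG
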